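/- arXiv:1506.05093 — 5 statements merged into one kernel-verified Lean document; each statement's English description precedes it below -/
import Mathlib

section
/- Let β = 1300. In Ghaffari's MIS process, for every outcome ω ∈ Ω, every vertex v with deg(v) ≥ 2, and every real K ≥ 0, set L = log₂(deg(v)) + K and T = ⌈β·L⌉. Then at least one of the following holds: (i) v ∉ A_T (v has decided by round T); (ii) the number of rounds t < T with v ∈ A_t, d_t(v) < 2 and p_t(v) = 1/2 (type-1 golden rounds) is at least 100·L; (iii) the number of rounds t < T with v ∈ A_t, d_t(v) ≥ 1 and Σ_{u ∈ N(v) ∩ A_t with d_t(u) < 2} p_t(u) ≥ d_t(v)/10 (type-2 golden rounds) is at least 100·L. -/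
/-!
Suppose `v` is still alive at round `T`. Call a round heavy when `d_t(v) ≥ 2`, and let `h`, `g₁`, `g₂`
count the heavy, type-1 golden and type-2 golden rounds before `T`.

*Desire-level of `v`.* Write `p_t(v) = 2^{-(k+1)}`. A heavy round raises `k` by one; a round that is not
heavy lowers `k` by one, or is type-1 golden when `k = 0`. As `k ≥ 0`, there are at most `h` lowering
rounds, so `T ≤ 2 h + g₁` (`rounds_le_heavy_add_golden`).

*Effective degree of `v`.* In a round with `d_t(v) ≥ 1` that is not type-2 golden, neighbours of
effective degree at least `2` carry over `9/10` of `d_t(v)` and halve their desire-level, while the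
others at most double it, so `d_{t+1}(v) ≤ (13/20) d_t(v)`; in every round `d_{t+1}(v) ≤ 2 d_t(v)`. In
particular `d` can cross from below `2` to at least `2` only in a type-2 golden round. The potential
`Ψ(d) = d` for `d ≥ 2`, `Ψ(d) = 13/10` for `d < 2`, thus has `Ψ²` at least halved in each heavy round
that is not golden, multiplied by at most `16` in a golden round, and never increased in any other
round. Since `Ψ ≥ 1` throughout and `Ψ(d_0(v)) ≤ deg v`, this gives `2^h ≤ (deg v)² 32^{g₂}`
(`potential_bound`), that is, `h ≤ 2 log₂ (deg v) + 5 g₂`.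

If `g₁ < 100 L`, then `h ≥ 600 L`, hence `5 g₂ ≥ 598 L` and `g₂ ≥ 100 L`.
-/

open MeasureTheory Finset
open scoped Classical

/-- State of Ghaffari's MIS process: alive (undecided) vertices, desire-levels, and
the set of vertices that have joined the MIS so far. -/
structure MISState (V : Type) where
  alive : Finset V
  p : V → ℝ
  mis : Finset V

/-- One round of Ghaffari's MIS process, driven by the seeds `r : V → ℝ`. -/
noncomputable def ghStep {V : Type} [Fintype V] [DecidableEq V] (G : SimpleGraph V)
    (r : V → ℝ) (s : MISState V) : MISState V :=
  let marked : Finset V := s.alive.filter fun v => r v < s.p v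
  let joins : Finset V := marked.filter fun v => ∀ u ∈ marked, ¬ G.Adj v u
  let d : V → ℝ := fun v => ∑ u ∈ G.neighborFinset v ∩ s.alive, s.p u
  { alive := s.alive \ (joins ∪ Finset.univ.filter fun v => ∃ u ∈ joins, G.Adj u v)
    p := fun v => if 2 ≤ d v then s.p v / 2 else min (2 * s.p v) (1 / 2)
    mis := s.mis ∪ joins }

/-- The state of Ghaffari's MIS process after `t` rounds, with seeds `ω`. -/
noncomputable def ghState {V : Type} [Fintype V] [DecidableEq V] (G : SimpleGraph V)
    (ω : ℕ → V → ℝ) : ℕ → MISState V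
  | 0 => ⟨Finset.univ, fun _ => 1 / 2, ∅⟩
  | t + 1 => ghStep G (ω t) (ghState G ω t)

/-- `A_t` : the set of vertices still undecided at round `t`. -/
noncomputable def ghAlive {V : Type} [Fintype V] [DecidableEq V] (G : SimpleGraph V)
    (ω : ℕ → V → ℝ) (t : ℕ) : Finset V := (ghState G ω t).alive

/-- `p_t` : the desire-levels at round `t`. -/
noncomputable def ghDesire {V : Type} [Fintype V] [DecidableEq V] (G : SimpleGraph V)
    (ω : ℕ → V → ℝ) (t : ℕ) : V → ℝ := (ghState G ω t).p

/-- `M_t` : the set of vertices having joined the MIS in rounds `0, …, t-1`. -/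
noncomputable def ghMIS {V : Type} [Fintype V] [DecidableEq V] (G : SimpleGraph V)
    (ω : ℕ → V → ℝ) (t : ℕ) : Finset V := (ghState G ω t).mis

/-- `d_t(v)` : the effective degree of `v` at round `t`. -/
noncomputable def ghEffDeg {V : Type} [Fintype V] [DecidableEq V] (G : SimpleGraph V)
    (ω : ℕ → V → ℝ) (t : ℕ) (v : V) : ℝ :=
  ∑ u ∈ G.neighborFinset v ∩ ghAlive G ω t, ghDesire G ω t u

section Helpers

variable {V : Type} [Fintype V] [DecidableEq V] (G : SimpleGraph V) (ω : ℕ → V → ℝ)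

lemma ghDesire_succ (t : ℕ) (v : V) :
    ghDesire G ω (t + 1) v = if 2 ≤ ghEffDeg G ω t v then ghDesire G ω t v / 2
      else min (2 * ghDesire G ω t v) (1 / 2) := rfl

lemma ghAlive_succ_subset (t : ℕ) : ghAlive G ω (t + 1) ⊆ ghAlive G ω t :=
  Finset.sdiff_subset

lemma ghAlive_antitone : Antitone (ghAlive G ω) :=
  antitone_nat_of_succ_le (ghAlive_succ_subset G ω)

lemma ghDesire_nonneg (t : ℕ) (v : V) : 0 ≤ ghDesire G ω t v := by
  induction t with
  | zero => change (0 : ℝ) ≤ 1 / 2; norm_num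
  | succ t ih =>
    rw [ghDesire_succ]
    split_ifs
    · linarith
    · exact le_min (by linarith) (by norm_num)

lemma ghDesire_succ_le (t : ℕ) (v : V) : ghDesire G ω (t + 1) v ≤ 2 * ghDesire G ω t v := by
  have := ghDesire_nonneg G ω t v
  rw [ghDesire_succ]
  split_ifs
  · linarith
  · exact min_le_left _ _

lemma ghEffDeg_nonneg (t : ℕ) (v : V) : 0 ≤ ghEffDeg G ω t v :=
  Finset.sum_nonneg fun u _ => ghDesire_nonneg G ω t u

lemma ghEffDeg_zero_le (v : V) : ghEffDeg G ω 0 v ≤ G.degree v / 2 := by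
  have h : ghEffDeg G ω 0 v = ∑ u ∈ G.neighborFinset v ∩ Finset.univ, (1 / 2 : ℝ) := rfl
  rw [h, Finset.inter_univ, Finset.sum_const, nsmul_eq_mul, G.card_neighborFinset_eq_degree]
  linarith

/-- The part of `d_t(v)` carried by the alive neighbours of effective degree below `2`. -/
noncomputable def lightPart (t : ℕ) (v : V) : ℝ :=
  ∑ u ∈ (G.neighborFinset v ∩ ghAlive G ω t).filter (fun u => ghEffDeg G ω t u < 2),
    ghDesire G ω t u

/-- The neighbours of effective degree at least `2` halve their desire-level, the others at most
double it. -/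
lemma ghEffDeg_succ_le (t : ℕ) (v : V) :
    ghEffDeg G ω (t + 1) v ≤ ghEffDeg G ω t v / 2 + 3 / 2 * lightPart G ω t v := by
  have h1 : ghEffDeg G ω (t + 1) v ≤
      ∑ u ∈ G.neighborFinset v ∩ ghAlive G ω t, ghDesire G ω (t + 1) u :=
    Finset.sum_le_sum_of_subset_of_nonneg
      (Finset.inter_subset_inter_left (ghAlive_succ_subset G ω t))
      fun u _ _ => ghDesire_nonneg G ω (t + 1) u
  refine h1.trans ?_
  rw [lightPart, ghEffDeg, Finset.sum_filter, Finset.mul_sum, Finset.sum_div,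
    ← Finset.sum_add_distrib]
  refine Finset.sum_le_sum fun u _ => ?_
  have h2 := ghDesire_succ_le G ω t u
  split_ifs with h
  · linarith
  · rw [ghDesire_succ, if_pos (not_lt.mp h)]
    linarith

lemma ghEffDeg_succ_le_two_mul (t : ℕ) (v : V) :
    ghEffDeg G ω (t + 1) v ≤ 2 * ghEffDeg G ω t v := by
  have h1 := ghEffDeg_succ_le G ω t v
  have h2 : lightPart G ω t v ≤ ghEffDeg G ω t v :=
    Finset.sum_le_sum_of_subset_of_nonneg (Finset.filter_subset _ _)
      fun u _ _ => ghDesire_nonneg G ω t u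
  linarith

/-- The number of rounds before `t` satisfying `P`. -/
noncomputable def cnt (P : ℕ → Prop) (t : ℕ) : ℕ := ((Finset.range t).filter P).card

lemma cnt_succ (P : ℕ → Prop) (t : ℕ) : cnt P (t + 1) = cnt P t + if P t then 1 else 0 := by
  unfold cnt
  rw [Finset.range_add_one, Finset.filter_insert]
  split_ifs <;> simp

/-- The exponent `k` of `p_t(v) = 2^{-(k+1)}` rises only in heavy rounds and falls in every other
round, except in type-1 golden rounds, where `k = 0`. -/
lemma rounds_le_heavy_add_golden (v : V) (t : ℕ) (hv : v ∈ ghAlive G ω t) :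
    ∃ k : ℕ, ghDesire G ω t v = (1 / 2) ^ (k + 1) ∧
      t + k ≤ 2 * cnt (fun s => 2 ≤ ghEffDeg G ω s v) t +
        cnt (fun s => v ∈ ghAlive G ω s ∧ ghEffDeg G ω s v < 2 ∧ ghDesire G ω s v = 1 / 2) t := by
  induction t with
  | zero => exact ⟨0, by change (1 / 2 : ℝ) = _; norm_num, by simp⟩
  | succ t ih =>
    have hv' := ghAlive_succ_subset G ω t hv
    obtain ⟨k, hk, hle⟩ := ih hv'
    rw [cnt_succ, cnt_succ, ghDesire_succ]
    by_cases h : 2 ≤ ghEffDeg G ω t v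
    · refine ⟨k + 1, ?_, ?_⟩
      · rw [if_pos h, hk]; ring
      · rw [if_pos h]; omega
    · cases k with
      | zero =>
        have hp : ghDesire G ω t v = 1 / 2 := by rw [hk]; norm_num
        refine ⟨0, ?_, ?_⟩
        · rw [if_neg h, hp]; norm_num
        · rw [if_neg h, if_pos ⟨hv', not_le.mp h, hp⟩]; omega
      | succ k =>
        refine ⟨k, ?_, by omega⟩
        have h2 : 2 * ghDesire G ω t v = (1 / 2) ^ (k + 1) := by rw [hk]; ring
        rw [if_neg h, h2, min_eq_left]
        exact (pow_le_pow_of_le_one (by norm_num) (by norm_num) (by omega : 1 ≤ k + 1)).trans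
          (by norm_num)

/-- The potential `Ψ`. The value `13/10 = (13/20) · 2` below `2` makes `Ψ` shrink by the factor
`13/20` also when a heavy round that is not golden takes `d` below `2`. -/
noncomputable def pot (x : ℝ) : ℝ := if 2 ≤ x then x else 13 / 10

lemma one_le_pot (x : ℝ) : 1 ≤ pot x := by
  unfold pot; split_ifs <;> linarith

lemma potential_bound (v : V) (hdeg : 2 ≤ G.degree v) (t : ℕ) (hv : v ∈ ghAlive G ω t) :
    pot (ghEffDeg G ω t v) ^ 2 * 2 ^ cnt (fun s => 2 ≤ ghEffDeg G ω s v) t ≤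
      (G.degree v : ℝ) ^ 2 * 32 ^ cnt (fun s => v ∈ ghAlive G ω s ∧ 1 ≤ ghEffDeg G ω s v ∧
        ghEffDeg G ω s v / 10 ≤ lightPart G ω s v) t := by
  induction t with
  | zero =>
    have h0 := ghEffDeg_zero_le G ω v
    have hd : (2 : ℝ) ≤ G.degree v := by exact_mod_cast hdeg
    have h1 : pot (ghEffDeg G ω 0 v) ≤ G.degree v := by
      unfold pot; split_ifs <;> linarith
    have h2 := one_le_pot (ghEffDeg G ω 0 v)
    simp only [cnt, Finset.range_zero, Finset.filter_empty, Finset.card_empty, pow_zero, mul_one]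
    gcongr
  | succ t ih =>
    have hv' := ghAlive_succ_subset G ω t hv
    have ih := ih hv'
    rw [cnt_succ, cnt_succ]
    have hA := ghEffDeg_succ_le G ω t v
    have hB := ghEffDeg_succ_le_two_mul G ω t v
    generalize cnt (fun s => 2 ≤ ghEffDeg G ω s v) t = a at *
    generalize cnt (fun s => v ∈ ghAlive G ω s ∧ 1 ≤ ghEffDeg G ω s v ∧
        ghEffDeg G ω s v / 10 ≤ lightPart G ω s v) t = b at *
    have h1 := one_le_pot (ghEffDeg G ω (t + 1) v)
    have h1' := one_le_pot (ghEffDeg G ω t v)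
    have hpos : (0 : ℝ) < 2 ^ a := by positivity
    by_cases hg : v ∈ ghAlive G ω t ∧ 1 ≤ ghEffDeg G ω t v ∧
        ghEffDeg G ω t v / 10 ≤ lightPart G ω t v
    · rw [if_pos hg]
      have h4 : pot (ghEffDeg G ω (t + 1) v) ≤ 4 * pot (ghEffDeg G ω t v) := by
        unfold pot; split_ifs <;> linarith
      have h5 : pot (ghEffDeg G ω (t + 1) v) ^ 2 ≤ 16 * pot (ghEffDeg G ω t v) ^ 2 := by
        nlinarith
      have h6 : (2 : ℝ) ^ (a + if 2 ≤ ghEffDeg G ω t v then 1 else 0) ≤ 2 * 2 ^ a := by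
        split_ifs
        · rw [pow_succ]; linarith
        · rw [add_zero]; linarith
      calc _ ≤ (16 * pot (ghEffDeg G ω t v) ^ 2) * (2 * 2 ^ a) := by gcongr
        _ = 32 * (pot (ghEffDeg G ω t v) ^ 2 * 2 ^ a) := by ring
        _ ≤ 32 * ((G.degree v : ℝ) ^ 2 * 32 ^ b) := by gcongr
        _ = _ := by ring
    · rw [if_neg hg, add_zero]
      refine le_trans ?_ ih
      have hlt : 1 ≤ ghEffDeg G ω t v → lightPart G ω t v < ghEffDeg G ω t v / 10 :=
        fun h => not_le.mp fun h' => hg ⟨hv', h, h'⟩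
      by_cases h : 2 ≤ ghEffDeg G ω t v
      · have hl := hlt (by linarith)
        rw [if_pos h, pow_succ]
        have h4 : pot (ghEffDeg G ω (t + 1) v) ≤ 13 / 20 * pot (ghEffDeg G ω t v) := by
          unfold pot; split_ifs <;> linarith
        have h5 : pot (ghEffDeg G ω (t + 1) v) ^ 2 * 2 ≤ pot (ghEffDeg G ω t v) ^ 2 := by
          nlinarith
        calc _ = (pot (ghEffDeg G ω (t + 1) v) ^ 2 * 2) * 2 ^ a := by ring
          _ ≤ _ := by gcongr
      · rw [if_neg h, add_zero]
        have h' : ¬ 2 ≤ ghEffDeg G ω (t + 1) v := by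
          by_cases h1 : 1 ≤ ghEffDeg G ω t v
          · have := hlt h1
            linarith
          · linarith
        rw [pot, pot, if_neg h, if_neg h']

end Helpers

/-- golden-rounds counting lemma, with `β = 1300`. For every outcome
`ω`, every vertex `v` with `deg v ≥ 2` and every `K ≥ 0`, with `L = log₂(deg v) + K`
and `T = ⌈1300 L⌉`: either `v` has decided by round `T`, or `v` has at least `100 L`
type-1 golden rounds before `T`, or at least `100 L` type-2 golden rounds before `T`. -/
theorem ghaffari_golden_rounds {V : Type} [Fintype V] [DecidableEq V] (G : SimpleGraph V)
    (ω : ℕ → V → ℝ) (v : V) (hdeg : 2 ≤ G.degree v) (K : ℝ) (hK : 0 ≤ K) :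
    ∀ (L : ℝ), L = Real.logb 2 (G.degree v) + K →
    ∀ (T : ℕ), T = ⌈(1300 : ℝ) * L⌉₊ →
      v ∉ ghAlive G ω T ∨
      100 * L ≤ (((Finset.range T).filter fun t =>
          v ∈ ghAlive G ω t ∧ ghEffDeg G ω t v < 2 ∧ ghDesire G ω t v = 1 / 2).card : ℝ) ∨
      100 * L ≤ (((Finset.range T).filter fun t =>
          v ∈ ghAlive G ω t ∧ 1 ≤ ghEffDeg G ω t v ∧
          ghEffDeg G ω t v / 10 ≤
            ∑ u ∈ (G.neighborFinset v ∩ ghAlive G ω t).filter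
                (fun u => ghEffDeg G ω t u < 2), ghDesire G ω t u).card : ℝ) := by
  intro L hL T hT
  by_contra! hcon
  obtain ⟨hv, hg1, hg2⟩ := hcon
  obtain ⟨k, -, hk⟩ := rounds_le_heavy_add_golden G ω v T hv
  have hpot := potential_bound G ω v hdeg T hv
  have hg1' : (cnt (fun s => v ∈ ghAlive G ω s ∧ ghEffDeg G ω s v < 2 ∧
      ghDesire G ω s v = 1 / 2) T : ℝ) < 100 * L := by
    refine lt_of_eq_of_lt (congrArg Nat.cast ?_) hg1
    unfold cnt
    congr
  have hg2' : (cnt (fun s => v ∈ ghAlive G ω s ∧ 1 ≤ ghEffDeg G ω s v ∧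
      ghEffDeg G ω s v / 10 ≤ lightPart G ω s v) T : ℝ) < 100 * L := by
    refine lt_of_eq_of_lt (congrArg Nat.cast ?_) hg2
    unfold cnt lightPart
    congr
  generalize cnt (fun s => 2 ≤ ghEffDeg G ω s v) T = h at *
  generalize cnt (fun s => v ∈ ghAlive G ω s ∧ ghEffDeg G ω s v < 2 ∧
      ghDesire G ω s v = 1 / 2) T = a at *
  generalize cnt (fun s => v ∈ ghAlive G ω s ∧ 1 ≤ ghEffDeg G ω s v ∧
      ghEffDeg G ω s v / 10 ≤ lightPart G ω s v) T = b at *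
  have hd : (0 : ℝ) < G.degree v := by exact_mod_cast (by omega : 0 < G.degree v)
  have hbound : (2 : ℝ) ^ h ≤ (G.degree v : ℝ) ^ 2 * 32 ^ b := by
    refine le_trans ?_ hpot
    exact le_mul_of_one_le_left (by positivity) (one_le_pow₀ (one_le_pot _))
  have hlog : (h : ℝ) ≤ 2 * Real.logb 2 (G.degree v) + 5 * b := by
    have h1 := Real.logb_le_logb_of_le (b := 2) (by norm_num) (by positivity) hbound
    have h32 : Real.logb 2 32 = 5 := by
      rw [show (32 : ℝ) = 2 ^ 5 by norm_num, Real.logb_pow, Real.logb_self_eq_one (by norm_num)]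
      norm_num
    rw [Real.logb_mul (by positivity) (by positivity), Real.logb_pow, Real.logb_pow,
      Real.logb_pow, Real.logb_self_eq_one (by norm_num), h32] at h1
    push_cast at h1
    linarith
  have hT' : 1300 * L ≤ T := hT ▸ Nat.le_ceil _
  have hk' : (T : ℝ) ≤ 2 * h + a := by exact_mod_cast (by omega : T ≤ 2 * h + a)
  have hL0 : 0 ≤ L := by
    have : 0 ≤ (a : ℝ) := a.cast_nonneg
    linarith
  linarith
end

section
/- Let (p_t)_{t ∈ ℕ} be a real sequence and B ⊆ ℕ such that p_0 = 1/2 and for every t: p_{t+1} = p_t/2 if t ∈ B, and p_{t+1} = min(2·p_t, 1/2) if t ∉ B. Then for every T ∈ ℕ, the number of indices t < T with t ∉ B and p_t = 1/2 is at least T − 3·|{t < T : t ∈ B}|. -/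
/-!
Write `p T = (1/2)^(k+1)`, so that `k` is the number of halvings not yet undone. Each round in `B`
raises `k` by one, each round outside `B` with `p t < 1/2` lowers it by one, and each round outside
`B` with `p t = 1/2` leaves `k = 0` unchanged. Counting rounds by these three types gives the exact
identity `T + k = 2 |B ∩ [0, T)| + |{t < T : t ∉ B, p t = 1/2}|`, which is proved by induction
on `T`. As `k = |B ∩ [0, T)| - |{t < T : t ∉ B, p t < 1/2}| ≥ 0`, the bound holds even with `2` in
place of `3`.
-/

open Finset
open scoped Classical

/-- desire-level counting. If `p 0 = 1/2`, `p (t+1) = p t / 2` for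
`t ∈ B` and `p (t+1) = min (2 p t) (1/2)` for `t ∉ B`, then for every `T`, the number
of rounds `t < T` with `t ∉ B` and `p t = 1/2` is at least `T - 3 |{t < T : t ∈ B}|`. -/
theorem desire_level_counting (p : ℕ → ℝ) (B : Set ℕ)
    (h0 : p 0 = 1 / 2)
    (hB : ∀ t, t ∈ B → p (t + 1) = p t / 2)
    (hnB : ∀ t, t ∉ B → p (t + 1) = min (2 * p t) (1 / 2)) :
    ∀ T : ℕ,
      (T : ℤ) - 3 * (((Finset.range T).filter fun t => t ∈ B).card : ℤ) ≤
        (((Finset.range T).filter fun t => t ∉ B ∧ p t = 1 / 2).card : ℤ) := by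
  have key : ∀ T : ℕ, ∃ k : ℕ, p T = (1 / 2) ^ (k + 1) ∧
      T + k = 2 * ((Finset.range T).filter fun t => t ∈ B).card +
        ((Finset.range T).filter fun t => t ∉ B ∧ p t = 1 / 2).card := by
    intro T
    induction T with
    | zero => exact ⟨0, by simp [h0], by simp⟩
    | succ T ih =>
      obtain ⟨k, hk, hc⟩ := ih
      by_cases hT : T ∈ B
      · refine ⟨k + 1, ?_, ?_⟩
        · rw [hB T hT, hk]; ring
        · simp [Finset.range_add_one, Finset.filter_insert, hT] at hc ⊢
          omega
      · cases k with
        | zero =>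
          have hp : p T = 1 / 2 := by simpa using hk
          refine ⟨0, ?_, ?_⟩
          · rw [hnB T hT, hp]; norm_num
          · simp [Finset.range_add_one, Finset.filter_insert, hT, hp] at hc ⊢
            omega
        | succ k =>
          have hle : ((1 : ℝ) / 2) ^ k ≤ 1 := pow_le_one₀ (by norm_num) (by norm_num)
          have hp : p T ≠ 1 / 2 := by
            rw [hk, pow_succ, pow_succ]
            intro h
            linarith
          refine ⟨k, ?_, ?_⟩
          · rw [hnB T hT, hk, min_eq_left]
            · ring
            · rw [pow_succ, pow_succ]; linarith
          · have hp' : p T ≠ 2⁻¹ := by simpa using hp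
            simp [Finset.range_add_one, Finset.filter_insert, hT, hp'] at hc ⊢
            omega
  intro T
  obtain ⟨k, -, hc⟩ := key T
  omega
end

section
/- Let D ≥ 1 be a real number, (d_t)_{t ∈ ℕ} a sequence of nonnegative reals with d_0 ≤ D, and E ⊆ ℕ a set of exception rounds such that: (i) d_{t+1} ≤ 2·d_t for every t, and (ii) d_{t+1} ≤ (2/3)·d_t for every t ∉ E with d_t ≥ 1. Then for every T ∈ ℕ, the number of indices t < T with d_t ≥ 2 is at most log(D)/log(3/2) + 3·|{t < T : t ∈ E}|. -/
/-!
The proof is a potential argument. To a round with effective degree `x` assign the potential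
`log (3x/4)` if `x ≥ 2` and `0` otherwise, and measure everything in units of `log (3/2)`.
The factor `3/4` makes the potential exactly one unit at `x = 2`.

* In a non-exception round with `d t ≥ 2` the potential drops by at least one unit, either
  because `d` shrinks by `2/3` or because it falls from at least one unit to `0`.
* In a non-exception round with `d t < 2` we have `d (t + 1) < 2`, so the potential stays `0`:
  for `d t ≥ 1` by shrinking, and for `d t < 1` because `d` at most doubles.
* In an exception round the potential plus the count grows by at most three units: if `d t ≥ 2`,
  by at most `log 2` plus one unit, where `2 ≤ (3/2)^2`; if `d t < 2`, the new potential is at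
  most `log 3`, and `3 ≤ (3/2)^3`.

The initial potential is at most `log D` and the final one is nonnegative, so telescoping gives
the bound.
-/

open Finset
open scoped Classical

/-- The potential of a round with effective degree `x`. The jump at `x = 2`, from `0` to
`log (3/2)`, pays for the last round before the degree falls below `2`. -/
noncomputable def degreePotential (x : ℝ) : ℝ :=
  if 2 ≤ x then Real.log (3 / 4 * x) else 0

lemma log_three_halves_pos : 0 < Real.log (3 / 2) := Real.log_pos (by norm_num)

lemma log_three_halves_le_degreePotential {x : ℝ} (hx : 2 ≤ x) :
    Real.log (3 / 2) ≤ degreePotential x := by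
  rw [degreePotential, if_pos hx]
  exact Real.log_le_log (by norm_num) (by linarith)

lemma degreePotential_nonneg (x : ℝ) : 0 ≤ degreePotential x := by
  by_cases hx : 2 ≤ x
  · exact log_three_halves_pos.le.trans (log_three_halves_le_degreePotential hx)
  · rw [degreePotential, if_neg hx]

/-- A non-exception round: the potential pays one unit for a round of degree at least `2`. -/
lemma degreePotential_step_shrink {x y : ℝ} (hxy : y ≤ 2 * x)
    (hs : 1 ≤ x → y ≤ 2 / 3 * x) :
    degreePotential y + (if 2 ≤ x then Real.log (3 / 2) else 0) ≤ degreePotential x := by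
  by_cases hx : 2 ≤ x
  · rw [if_pos hx]
    by_cases hy : 2 ≤ y
    · rw [degreePotential, degreePotential, if_pos hx, if_pos hy,
        ← Real.log_mul (by positivity) (by norm_num)]
      have := hs (by linarith)
      exact Real.log_le_log (by positivity) (by linarith)
    · rw [degreePotential, if_neg hy, zero_add]
      exact log_three_halves_le_degreePotential hx
  · have hy : ¬ 2 ≤ y := by
      intro hy
      have := hs (by linarith)
      linarith
    simp [degreePotential, hx, hy]

/-- An arbitrary round: potential and count together grow by at most three units. -/
lemma degreePotential_step_double {x y : ℝ} (hxy : y ≤ 2 * x) :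
    degreePotential y + (if 2 ≤ x then Real.log (3 / 2) else 0) ≤
      degreePotential x + 3 * Real.log (3 / 2) := by
  have hL := log_three_halves_pos
  have hx0 := degreePotential_nonneg x
  by_cases hy : 2 ≤ y
  · by_cases hx : 2 ≤ x
    · have h2 : Real.log 2 ≤ 2 * Real.log (3 / 2) := by
        have := Real.log_le_log (x := 2) (y := (3 / 2) ^ 2) (by norm_num) (by norm_num)
        rwa [Real.log_pow, Nat.cast_ofNat] at this
      have h : Real.log (3 / 4 * y) ≤ Real.log (3 / 4 * x) + Real.log 2 := by
        rw [← Real.log_mul (by positivity) (by norm_num)]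
        exact Real.log_le_log (by positivity) (by linarith)
      rw [degreePotential, degreePotential, if_pos hx, if_pos hx, if_pos hy]
      linarith
    · have h : Real.log (3 / 4 * y) ≤ 3 * Real.log (3 / 2) := by
        have := Real.log_le_log (x := 3 / 4 * y) (y := (3 / 2) ^ 3) (by positivity)
          (by norm_num; linarith)
        rwa [Real.log_pow, Nat.cast_ofNat] at this
      rw [if_neg hx, degreePotential, if_pos hy]
      linarith
  · rw [degreePotential, if_neg hy]
    split_ifs <;> linarith

/-- effective-degree counting. Let `D ≥ 1`, let `d : ℕ → ℝ` be
nonnegative with `d 0 ≤ D`, which at most doubles each round, and which shrinks by a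
factor `2/3` in every non-exception round in which it is at least `1`. Then for every
`T`, the number of rounds `t < T` with `d t ≥ 2` is at most
`log D / log (3/2) + 3 |{t < T : t ∈ E}|`. -/
theorem effective_degree_counting (D : ℝ) (hD : 1 ≤ D) (d : ℕ → ℝ) (E : Set ℕ)
    (hpos : ∀ t, 0 ≤ d t) (h0 : d 0 ≤ D)
    (hdouble : ∀ t, d (t + 1) ≤ 2 * d t)
    (hshrink : ∀ t, t ∉ E → 1 ≤ d t → d (t + 1) ≤ (2 / 3) * d t) :
    ∀ T : ℕ,
      ((((Finset.range T).filter fun t => 2 ≤ d t).card : ℝ)) ≤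
        Real.log D / Real.log (3 / 2) +
          3 * (((Finset.range T).filter fun t => t ∈ E).card : ℝ) := by
  intro T
  have hL := log_three_halves_pos
  have key : degreePotential (d T) +
      (((Finset.range T).filter fun t => 2 ≤ d t).card : ℝ) * Real.log (3 / 2) ≤
      Real.log D +
        3 * (((Finset.range T).filter fun t => t ∈ E).card : ℝ) * Real.log (3 / 2) := by
    induction T with
    | zero =>
      have : degreePotential (d 0) ≤ Real.log D := by
        rw [degreePotential]
        split_ifs with h
        · exact Real.log_le_log (by positivity) (by linarith)
        · exact Real.log_nonneg hD
      simpa using this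
    | succ T ih =>
      have hcount (p : ℕ → Prop) [DecidablePred p] :
          (((Finset.range (T + 1)).filter p).card : ℝ) =
            ((Finset.range T).filter p).card + if p T then 1 else 0 := by
        rw [Finset.range_add_one, Finset.filter_insert]
        split_ifs <;> simp
      rw [hcount, hcount]
      by_cases hE : T ∈ E
      · have := degreePotential_step_double (hdouble T)
        rw [if_pos hE]
        split_ifs at this ⊢ <;> linarith
      · have := degreePotential_step_shrink (hdouble T) (hshrink T hE)
        rw [if_neg hE]
        split_ifs at this ⊢ <;> linarith
  have hT := degreePotential_nonneg (d T)
  rw [← sub_le_iff_le_add, le_div_iff₀ hL]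
  linarith
end

section
/- Let u ∈ V be a vertex with deg(u) ≥ 1, let d_max = max_{w ∈ N⁺(u)} deg(w), and let u* be the vertex of N⁺(u) at which π attains its minimum over N⁺(u). Then the probability that u* is a local minimum (i.e., π(u*) < π(x) for all x ∈ N(u*)) is at least (deg(u)+1)/(deg(u)+d_max). Consequently, with probability at least (deg(u)+1)/(deg(u)+d_max), some vertex of N⁺(u) is a local minimum. -/
/-!
For `w ∈ N⁺(u)` put `A_w = N⁺(u) ∪ N⁺(w)`. If `π` attains its minimum over `A_w` at `w`, then `w` is
both the minimizer `u*` over `N⁺(u)` and a local minimum. These events are disjoint for distinct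
`w`, since each determines `u*`. By symmetry each has probability (at least) `1 / |A_w|`
(`card_le_card_mul_card_minAt`), and `|A_w| ≤ deg u + d_max` because `u` and `w` lie in both closed
neighborhoods (`card_closedNhd_union_le`; for `w = u` use `1 ≤ deg u`). Summing over the `deg u + 1` vertices of `N⁺(u)` gives
the bound; the second claim follows by monotonicity.
-/

open Finset ProbabilityTheory

/-- We equip the (finite) type of bijections `V ≃ Fin |V|` with the discrete σ-algebra;
`uniformOn Set.univ` is then the uniform probability measure on random orders `π`. -/
instance permMeasurableSpace {V : Type} [Fintype V] [DecidableEq V] :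
    MeasurableSpace (V ≃ Fin (Fintype.card V)) := ⊤

section Luby

variable {V : Type} [Fintype V] [DecidableEq V]

/-- The orders `π` whose minimum over `A` is at `w` (meaningful for `w ∈ A`). -/
def minAt (A : Finset V) (w : V) : Finset (V ≃ Fin (Fintype.card V)) :=
  univ.filter fun π => ∀ x ∈ A, π w ≤ π x

/-- Exchanging the ranks of two elements of `A` shows that both are equally often the minimizer. -/
theorem card_minAt_le (A : Finset V) {w w' : V} (hw : w ∈ A) (hw' : w' ∈ A) :
    (minAt A w').card ≤ (minAt A w).card := by
  refine card_le_card_of_injOn (fun π => (Equiv.swap w w').trans π) ?_ ?_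
  · intro π hπ
    simp only [minAt, coe_filter, mem_univ, true_and, Set.mem_ofPred_eq] at hπ ⊢
    intro x hx
    simp only [Equiv.trans_apply, Equiv.swap_apply_left]
    apply hπ
    rw [Equiv.swap_apply_def]
    split_ifs <;> assumption
  · intro π _ ρ _ h
    ext x
    have := congrArg (fun f => f (Equiv.swap w w' x)) h
    simpa using congrArg Fin.val this

/-- Every order has a minimizer in `A`, so by symmetry `w ∈ A` is the minimizer with probability at
least `1 / |A|`. -/
theorem card_le_card_mul_card_minAt (A : Finset V) {w : V} (hw : w ∈ A) :
    Fintype.card (V ≃ Fin (Fintype.card V)) ≤ A.card * (minAt A w).card := by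
  have hcover : (univ : Finset (V ≃ Fin (Fintype.card V))) ⊆ A.biUnion (minAt A) := by
    intro π _
    obtain ⟨m, hm, hmin⟩ := A.exists_min_image π ⟨w, hw⟩
    exact mem_biUnion.2 ⟨m, hm, by simpa [minAt] using hmin⟩
  calc Fintype.card (V ≃ Fin (Fintype.card V))
      ≤ (A.biUnion (minAt A)).card := card_le_card hcover
    _ ≤ A.card * (minAt A w).card :=
      card_biUnion_le_card_mul _ _ _ fun _ h => card_minAt_le A hw h

variable (G : SimpleGraph V) [DecidableRel G.Adj]

/-- The closed neighborhood `N⁺(w)`. -/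
def closedNhd (w : V) : Finset V := insert w (G.neighborFinset w)

theorem card_closedNhd (w : V) : (closedNhd G w).card = G.degree w + 1 := by
  rw [closedNhd, card_insert_of_notMem (by simp), SimpleGraph.card_neighborFinset_eq_degree]

/-- For `w ≠ u` the intersection of the closed neighborhoods contains both `u` and `w`, which saves
`2`; for `w = u` the hypothesis `1 ≤ deg u` is what is needed. -/
theorem card_closedNhd_union_le {u w : V} (hu : 1 ≤ G.degree u) (hw : w ∈ closedNhd G u) :
    (closedNhd G u ∪ closedNhd G w).card ≤ G.degree u + G.degree w := by
  by_cases h : w = u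
  · subst h
    rw [union_self, card_closedNhd]
    omega
  · have hadj : G.Adj u w := by simpa [closedNhd, h] using hw
    have hsub : ({u, w} : Finset V) ⊆ closedNhd G u ∩ closedNhd G w := by
      intro x hx
      simp only [mem_insert, mem_singleton] at hx
      rcases hx with rfl | rfl <;> simp [closedNhd, hadj, hadj.symm]
    have h2 := card_le_card hsub
    rw [card_pair (Ne.symm h)] at h2
    have h3 := card_union_add_card_inter (closedNhd G u) (closedNhd G w)
    rw [card_closedNhd, card_closedNhd] at h3
    omega

/-- The disjoint events that `w ∈ N⁺(u)` minimizes `π` over `N⁺(u) ∪ N⁺(w)` together have at least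
a `(deg u + 1) / (deg u + D)` proportion of all orders. -/
theorem card_mul_le_card_biUnion_minAt {u : V} (hu : 1 ≤ G.degree u) {D : ℕ}
    (hD : ∀ w ∈ closedNhd G u, G.degree w ≤ D) :
    (G.degree u + 1) * Fintype.card (V ≃ Fin (Fintype.card V)) ≤
      (G.degree u + D) *
        ((closedNhd G u).biUnion fun w => minAt (closedNhd G u ∪ closedNhd G w) w).card := by
  rw [card_biUnion, mul_sum, ← card_closedNhd, ← smul_eq_mul]
  · refine card_nsmul_le_sum _ _ _ fun w hw => ?_
    refine (card_le_card_mul_card_minAt (closedNhd G u ∪ closedNhd G w)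
      (mem_union_left _ hw)).trans ?_
    have := hD w hw
    exact Nat.mul_le_mul_right _ ((card_closedNhd_union_le G hu hw).trans (by omega))
  · intro w hw w' hw' hne
    refine disjoint_left.2 fun π h h' => ?_
    simp only [minAt, mem_filter, mem_univ, true_and] at h h'
    exact hne (π.injective
      (le_antisymm (h _ (mem_union_left _ hw')) (h' _ (mem_union_left _ hw))))

end Luby

/-- Let `π` be a uniformly random bijection `V ≃ {0,…,n-1}`, let `u`
have `deg u ≥ 1` and let `d_max` be the maximum degree over the closed neighborhood
`N⁺(u)`. Then with probability at least `(deg u + 1)/(deg u + d_max)`, the vertex of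
`N⁺(u)` at which `π` attains its minimum is a local minimum; consequently, with at
least that probability some vertex of `N⁺(u)` is a local minimum. -/
theorem luby_removal_probability {V : Type} [Fintype V] [DecidableEq V]
    (G : SimpleGraph V) [DecidableRel G.Adj] (u : V) (hu : 1 ≤ G.degree u)
    (dmax : ℕ) (hdmax : dmax = (insert u (G.neighborFinset u)).sup (fun w => G.degree w)) :
    ((G.degree u + 1 : ENNReal) / ((G.degree u : ENNReal) + dmax) ≤
      uniformOn (Set.univ : Set (V ≃ Fin (Fintype.card V)))
        {π | ∃ w ∈ insert u (G.neighborFinset u),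
          (∀ x ∈ insert u (G.neighborFinset u), π w ≤ π x) ∧
          ∀ x, G.Adj w x → π w < π x}) ∧
    ((G.degree u + 1 : ENNReal) / ((G.degree u : ENNReal) + dmax) ≤
      uniformOn (Set.univ : Set (V ≃ Fin (Fintype.card V)))
        {π | ∃ w ∈ insert u (G.neighborFinset u), ∀ x, G.Adj w x → π w < π x}) := by
  have hD : ∀ w ∈ closedNhd G u, G.degree w ≤ dmax := fun w hw => by
    rw [hdmax]
    exact le_sup (f := fun w => G.degree w) hw
  have key : (G.degree u + 1 : ENNReal) / ((G.degree u : ENNReal) + dmax) ≤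
      uniformOn (Set.univ : Set (V ≃ Fin (Fintype.card V)))
        {π | ∃ w ∈ insert u (G.neighborFinset u),
          (∀ x ∈ insert u (G.neighborFinset u), π w ≤ π x) ∧
          ∀ x, G.Adj w x → π w < π x} := by
    have : DiscreteMeasurableSpace (V ≃ Fin (Fintype.card V)) := ⟨fun _ => trivial⟩
    have : Nonempty (V ≃ Fin (Fintype.card V)) := ⟨Fintype.equivFin V⟩
    set S := (closedNhd G u).biUnion fun w => minAt (closedNhd G u ∪ closedNhd G w) w with hS
    have hcard := card_mul_le_card_biUnion_minAt G hu hD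
    rw [← hS] at hcard
    refine le_trans ?_ (MeasureTheory.measure_mono (s := (S : Set _)) ?_)
    · rw [uniformOn_univ, MeasureTheory.Measure.count_apply_finset]
      have hn : (Fintype.card (V ≃ Fin (Fintype.card V)) : ENNReal) ≠ 0 := by
        exact_mod_cast Fintype.card_ne_zero
      rw [ENNReal.le_div_iff_mul_le (Or.inl hn) (Or.inl (ENNReal.natCast_ne_top _)),
        ← ENNReal.mul_div_right_comm]
      refine ENNReal.div_le_of_le_mul' ?_
      exact_mod_cast hcard
    · intro π hπ
      obtain ⟨w, hw, hmin⟩ := mem_biUnion.1 (mem_coe.1 hπ)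
      simp only [minAt, mem_filter, mem_univ, true_and] at hmin
      refine ⟨w, hw, fun x hx => hmin x (mem_union_left _ hx), fun x hx => ?_⟩
      refine lt_of_le_of_ne (hmin x (mem_union_right _ ?_)) (π.injective.ne hx.ne)
      simp [closedNhd, hx]
  refine ⟨key, key.trans (MeasureTheory.measure_mono ?_)⟩
  rintro π ⟨w, hw, -, hloc⟩
  exact ⟨w, hw, hloc⟩
end

section
/- The expected number of edges {u,v} ∈ E such that no vertex of N(u) ∪ N(v) is a local minimum is at most |E|/2. Equivalently, in one round of Luby's algorithm driven by the random order π (where every local minimum joins the MIS and is removed together with its neighbors), the expected number of edges that survive the round is at most half the number of edges. -/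
/-!
Write `d` for the degree. For an ordered adjacent pair `(v, w)` let `A v w` be the event that `w`
comes strictly before every other vertex of `N(v) ∪ N(w)`. If it happens then `w` is a local
minimum adjacent to `v`, so all `d v` edges at `v` are killed. For a fixed order and a fixed `v`,
at most one `w` satisfies `A v w`; hence the sum of `d v` over the ordered pairs satisfying `A`
counts each killed edge at most twice, once from each endpoint (`pointwise_bound`).

By symmetry each vertex of a set `S` is equally likely to come first in `S` (`card_le_mul_first`),
so `A v w` has probability at least `1 / (d v + d w)`. The pairs `(v, w)` and `(w, v)` together
contribute `(d v + d w) / (d v + d w) = 1`, so the expectation of the above sum is at least `|E|`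
(`sum_degree_ratio`). Therefore twice the expected number of killed edges is at least `|E|`.
-/

open Finset ProbabilityTheory MeasureTheory
open scoped Classical

namespace LubyProof

/-- `IsFirst π S w`: in the order `π`, the vertex `w` precedes all other vertices of `S`
(membership of `w` in `S` is not required). -/
def IsFirst {V : Type} [Fintype V] (π : V ≃ Fin (Fintype.card V)) (S : Finset V) (w : V) : Prop :=
  ∀ x ∈ S, x ≠ w → π w < π x

/-- The edge `e` has an endpoint adjacent to a local minimum of `π`. -/
def Killed {V : Type} [Fintype V] (G : SimpleGraph V) (π : V ≃ Fin (Fintype.card V))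
    (e : Sym2 V) : Prop :=
  ∃ w : V, (∃ a ∈ e, G.Adj a w) ∧ ∀ x, G.Adj w x → π w < π x

variable {V : Type} [Fintype V] [DecidableEq V]

/-- Precomposing with the transposition of `s` and `w` turns orders in which `s` is first in `S`
into orders in which `w` is. -/
lemma card_first_le (S : Finset V) {s w : V} (hs : s ∈ S) (hw : w ∈ S) :
    (univ.filter fun π : V ≃ Fin (Fintype.card V) => IsFirst π S s).card ≤
      (univ.filter fun π : V ≃ Fin (Fintype.card V) => IsFirst π S w).card := by
  refine Finset.card_le_card_of_injOn (fun π => (Equiv.swap s w).trans π) ?_ ?_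
  · intro π hπ
    simp only [coe_filter, mem_univ, true_and, Set.mem_ofPred_eq] at hπ ⊢
    intro x hx hxw
    simp only [Equiv.trans_apply, Equiv.swap_apply_right]
    apply hπ
    · by_cases h : x = s
      · subst h; simpa using hw
      · rwa [Equiv.swap_apply_of_ne_of_ne h hxw]
    · intro h
      apply hxw
      have := congrArg (Equiv.swap s w) h
      simpa using this
  · intro π _ ρ _ h
    ext x
    have := congrArg (fun e : V ≃ Fin (Fintype.card V) => e (Equiv.swap s w x)) h
    simp only [Equiv.trans_apply, Equiv.swap_apply_self] at this
    rw [this]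

/-- A vertex `w ∈ S` is first in `S` with probability at least `1 / |S|`. -/
lemma card_le_mul_first (S : Finset V) {w : V} (hw : w ∈ S) :
    Fintype.card (V ≃ Fin (Fintype.card V)) ≤
      S.card * (univ.filter fun π : V ≃ Fin (Fintype.card V) => IsFirst π S w).card := by
  have hcover : (univ : Finset (V ≃ Fin (Fintype.card V))) ⊆
      S.biUnion fun s => univ.filter fun π => IsFirst π S s := by
    intro π _
    obtain ⟨s, hs, hmin⟩ := S.exists_min_image π ⟨w, hw⟩
    simp only [mem_biUnion, mem_filter, mem_univ, true_and]
    exact ⟨s, hs, fun x hx hxs => lt_of_le_of_ne (hmin x hx) fun h => hxs (π.injective h.symm)⟩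
  calc _ = (univ : Finset (V ≃ Fin (Fintype.card V))).card := rfl
    _ ≤ _ := card_le_card hcover
    _ ≤ _ := card_biUnion_le_card_mul _ _ _ fun s hs => card_first_le S hs hw

variable (G : SimpleGraph V) [DecidableRel G.Adj]

lemma sum_dart {V : Type} [Fintype V] (G : SimpleGraph V) [DecidableRel G.Adj] (F : V → V → ℝ) :
    ∑ d : G.Dart, F d.fst d.snd = ∑ v, ∑ w ∈ G.neighborFinset v, F v w := by
  rw [Finset.sum_sigma']
  refine Finset.sum_bij' (fun d _ => ⟨d.fst, d.snd⟩)
    (fun p hp => ⟨(p.1, p.2), by simpa using hp⟩) ?_ ?_ ?_ ?_ ?_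
  · intro d _; simp
  all_goals simp

lemma sum_neighbors_edge (f : Sym2 V → ℝ) :
    ∑ v, ∑ u ∈ G.neighborFinset v, f s(v, u) = 2 * ∑ e ∈ G.edgeFinset, f e := by
  rw [← sum_dart G fun v u => f s(v, u), mul_sum,
    ← Finset.sum_fiberwise_of_maps_to (s := univ) (t := G.edgeFinset)
      (g := SimpleGraph.Dart.edge) (fun d _ => by simp)]
  refine sum_congr rfl fun e he => ?_
  have hc := G.dart_edge_fiber_card e (by simpa using he)
  rw [sum_congr rfl (g := fun _ => f e), sum_const, nsmul_eq_mul]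
  · congr 1
    exact_mod_cast (by convert hc)
  · intro d hd
    rw [← (mem_filter.1 hd).2]
    rfl

lemma sum_neighbors_comm {V : Type} [Fintype V] (G : SimpleGraph V) [DecidableRel G.Adj]
    (F : V → V → ℝ) :
    ∑ v, ∑ w ∈ G.neighborFinset v, F v w = ∑ v, ∑ w ∈ G.neighborFinset v, F w v := by
  refine Finset.sum_comm' ?_
  intro x y
  simp [G.adj_comm]

lemma sum_degree_ratio :
    ∑ v, ∑ w ∈ G.neighborFinset v, (G.degree v : ℝ) / (G.degree v + G.degree w) =
      G.edgeFinset.card := by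
  have h1 := sum_neighbors_comm G fun v w => (G.degree v : ℝ) / (G.degree v + G.degree w)
  have h2 : ∑ v, ∑ w ∈ G.neighborFinset v, (G.degree v : ℝ) / (G.degree v + G.degree w) +
      ∑ v, ∑ w ∈ G.neighborFinset v, (G.degree w : ℝ) / (G.degree w + G.degree v) =
      ∑ v, ∑ w ∈ G.neighborFinset v, (1 : ℝ) := by
    simp only [← sum_add_distrib]
    refine sum_congr rfl fun v _ => sum_congr rfl fun w hw => ?_
    have hv : 0 < G.degree v := (G.degree_pos_iff_exists_adj v).2 ⟨w, by simpa using hw⟩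
    have hv' : (0 : ℝ) < G.degree v := by exact_mod_cast hv
    rw [add_comm (G.degree w : ℝ), ← add_div, div_self (by positivity)]
  have h3 := sum_neighbors_edge G fun _ => 1
  simp only [sum_const, nsmul_eq_mul, mul_one] at h2 h3
  linarith

/-- For a fixed order, at most one neighbor `w` of `v` is first in `N(v) ∪ N(w)`, and if there is
one then all edges at `v` are killed. -/
lemma pointwise_bound (π : V ≃ Fin (Fintype.card V)) :
    ∑ v, ∑ w ∈ G.neighborFinset v, (G.degree v : ℝ) *
        (if IsFirst π (G.neighborFinset v ∪ G.neighborFinset w) w then 1 else 0) ≤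
      2 * ∑ e ∈ G.edgeFinset, if Killed G π e then (1 : ℝ) else 0 := by
  rw [← sum_neighbors_edge]
  refine sum_le_sum fun v _ => ?_
  by_cases h : ∃ w ∈ G.neighborFinset v,
      IsFirst π (G.neighborFinset v ∪ G.neighborFinset w) w
  · obtain ⟨w, hw, hf⟩ := h
    have hR : ∀ u ∈ G.neighborFinset v, (if Killed G π s(v, u) then (1 : ℝ) else 0) = 1 := by
      intro u _
      refine if_pos ⟨w, ⟨v, by simp, by simpa using hw⟩, fun x hx => hf x ?_ hx.ne'⟩
      simp [hx]
    rw [sum_congr rfl hR, sum_eq_single_of_mem w hw]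
    · simp [hf]
    · intro w' hw' hne
      rw [if_neg, mul_zero]
      intro hf'
      exact lt_asymm (hf w' (mem_union_left _ hw') hne)
        (hf' w (mem_union_left _ hw) hne.symm)
  · rw [sum_eq_zero]
    · exact sum_nonneg fun u _ => by split_ifs <;> norm_num
    · intro w hw
      rw [if_neg fun hf => h ⟨w, hw, hf⟩, mul_zero]

/-- Sum over all orders of the number of killed edges, bounded below. -/
lemma killed_total :
    (Fintype.card (V ≃ Fin (Fintype.card V)) : ℝ) * G.edgeFinset.card ≤
      2 * ∑ π : V ≃ Fin (Fintype.card V), ∑ e ∈ G.edgeFinset,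
        if Killed G π e then (1 : ℝ) else 0 := by
  rw [mul_sum]
  refine le_trans ?_ (sum_le_sum fun π _ => pointwise_bound G π)
  rw [sum_comm, ← sum_degree_ratio, mul_sum]
  refine sum_le_sum fun v _ => ?_
  rw [sum_comm, mul_sum]
  refine sum_le_sum fun w hw => ?_
  have hadj : G.Adj v w := by simpa using hw
  rw [← mul_sum, sum_boole]
  have h1 := card_le_mul_first (G.neighborFinset v ∪ G.neighborFinset w)
    (mem_union_left _ hw)
  have h2 : (G.neighborFinset v ∪ G.neighborFinset w).card ≤ G.degree v + G.degree w :=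
    card_union_le _ _
  have h3 := h1.trans (Nat.mul_le_mul_right _ h2)
  have h4 : (Fintype.card (V ≃ Fin (Fintype.card V)) : ℝ) ≤ (G.degree v + G.degree w) *
      ((univ.filter fun π : V ≃ Fin (Fintype.card V) =>
        IsFirst π (G.neighborFinset v ∪ G.neighborFinset w) w).card : ℝ) := by
    exact_mod_cast h3
  have hv : (0 : ℝ) < G.degree v := by
    exact_mod_cast (G.degree_pos_iff_exists_adj v).2 ⟨w, hadj⟩
  rw [mul_div_assoc', div_le_iff₀ (by positivity)]
  nlinarith [mul_le_mul_of_nonneg_left h4 hv.le]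

lemma integral_uniform (f : (V ≃ Fin (Fintype.card V)) → ℝ) :
    ∫ π, f π ∂(uniformOn (Set.univ : Set (V ≃ Fin (Fintype.card V)))) =
      (Fintype.card (V ≃ Fin (Fintype.card V)) : ℝ)⁻¹ * ∑ π, f π := by
  have : MeasurableSingletonClass (V ≃ Fin (Fintype.card V)) := ⟨fun _ => trivial⟩
  rw [uniformOn, ProbabilityTheory.cond, Measure.restrict_univ, integral_smul_measure, integral_count]
  simp [Measure.count_apply_finite, Set.finite_univ]

end LubyProof

/-- For a uniformly random bijection `π : V ≃ {0,…,n-1}`, the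
expected number of edges `{u,v}` such that no vertex of `N(u) ∪ N(v)` is a local
minimum of `π` (i.e., the expected number of edges surviving one round of Luby's
algorithm) is at most half the number of edges. -/
theorem luby_expected_halving {V : Type} [Fintype V] [DecidableEq V]
    (G : SimpleGraph V) [DecidableRel G.Adj] :
    (∫ π, ((G.edgeFinset.filter fun e =>
          ¬ ∃ w : V, (∃ a ∈ e, G.Adj a w) ∧ ∀ x, G.Adj w x → π w < π x).card : ℝ)
        ∂(uniformOn (Set.univ : Set (V ≃ Fin (Fintype.card V))))) ≤
      (G.edgeFinset.card : ℝ) / 2 := by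
  rw [LubyProof.integral_uniform]
  have hN : (0 : ℝ) < Fintype.card (V ≃ Fin (Fintype.card V)) := by
    have : Nonempty (V ≃ Fin (Fintype.card V)) := ⟨Fintype.equivFin V⟩
    exact_mod_cast Fintype.card_pos
  have hk := LubyProof.killed_total G
  have hsplit : ∀ π : V ≃ Fin (Fintype.card V),
      ((G.edgeFinset.filter fun e =>
          ¬ ∃ w : V, (∃ a ∈ e, G.Adj a w) ∧ ∀ x, G.Adj w x → π w < π x).card : ℝ) =
        G.edgeFinset.card - ∑ e ∈ G.edgeFinset,
          if LubyProof.Killed G π e then (1 : ℝ) else 0 := by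
    intro π
    rw [sum_boole, eq_sub_iff_add_eq', ← Nat.cast_add]
    congr 1
    convert card_filter_add_card_filter_not (s := G.edgeFinset) (LubyProof.Killed G π)
    rfl
  rw [sum_congr rfl fun π _ => hsplit π, sum_sub_distrib, sum_const, card_univ, nsmul_eq_mul,
    inv_mul_le_iff₀ hN]
  linarith
end
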